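/- Let E ⊂ X be a set of finite perimeter and let D ⊂ X be a Borel set. Suppose that {F,G} is a Borel partition of E such that P(E,D) = P(F,D) + P(G,D). Then P(A,D) = P(A ∩ F, D) + P(A ∩ G, D) for every set A ⊂ E of finite perimeter. -/

import Mathlib

open MeasureTheory Metric Filter Set ENNReal NNReal Topology

/-- A curve: a rectifiable continuous map from a compact interval into `X`,
parametrized by arc length (hence `1`-Lipschitz on `[0, len]`). -/
structure Curve (X : Type*) [MetricSpace X] where
  len : ℝ
  len_nonneg : 0 ≤ len
  toFun : ℝ → X
  lipschitzOn : LipschitzOnWith 1 toFun (Set.Icc 0 len)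

namespace Curve

variable {X : Type*} [MetricSpace X]

/-- A curve is nonconstant if it attains two distinct values. -/
def IsNonconstant (γ : Curve X) : Prop :=
  ∃ s ∈ Set.Icc (0:ℝ) γ.len, ∃ t ∈ Set.Icc (0:ℝ) γ.len, γ.toFun s ≠ γ.toFun t

/-- A curve lies in a set `W`. -/
def IsIn (γ : Curve X) (W : Set X) : Prop :=
  ∀ s ∈ Set.Icc (0:ℝ) γ.len, γ.toFun s ∈ W

end Curve

variable {X : Type*} [MetricSpace X] [MeasurableSpace X] [BorelSpace X]

/-- The curve integral `∫_γ g ds` for an arc-length parametrized curve. -/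
noncomputable def curveLintegral (g : X → ℝ≥0∞) (γ : Curve X) : ℝ≥0∞ :=
  ∫⁻ s in Set.Icc (0:ℝ) γ.len, g (γ.toFun s)

/-- The upper gradient inequality `|u(x) - u(y)| ≤ ∫_γ g ds` along a curve `γ`
with endpoints `x, y`. -/
def UpperGradIneq (g : X → ℝ≥0∞) (u : X → ℝ) (γ : Curve X) : Prop :=
  ENNReal.ofReal |u (γ.toFun 0) - u (γ.toFun γ.len)| ≤ curveLintegral g γ

/-- The 1-modulus of a family of curves. -/
noncomputable def mod1 (μ : Measure X) (Γ : Set (Curve X)) : ℝ≥0∞ :=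
  ⨅ (ρ : X → ℝ≥0∞) (_ : Measurable ρ ∧ ∀ γ ∈ Γ, 1 ≤ curveLintegral ρ γ),
    ∫⁻ x, ρ x ∂μ

/-- `g` is a 1-weak upper gradient of `u` in `W`: the upper gradient inequality
holds for all nonconstant curves in `W` outside a family of 1-modulus zero. -/
def IsWeakUpperGradientOn (μ : Measure X) (g : X → ℝ≥0∞) (u : X → ℝ) (W : Set X) : Prop :=
  Measurable g ∧
    mod1 μ {γ : Curve X | γ.IsNonconstant ∧ γ.IsIn W ∧ ¬ UpperGradIneq g u γ} = 0

/-- `g` is a (strong) upper gradient of `u` in `X`. -/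
def IsUpperGradient (g : X → ℝ≥0∞) (u : X → ℝ) : Prop :=
  Measurable g ∧ ∀ γ : Curve X, γ.IsNonconstant → UpperGradIneq g u γ

/-- `∫_W g_u dμ`: the integral over `W` of the minimal 1-weak upper gradient of `u`
in `W`, equivalently the infimum of `∫_W g dμ` over all 1-weak upper gradients `g`
of `u` in `W`. -/
noncomputable def gradEnergy (μ : Measure X) (u : X → ℝ) (W : Set X) : ℝ≥0∞ :=
  ⨅ (g : X → ℝ≥0∞) (_ : IsWeakUpperGradientOn μ g u W), ∫⁻ x in W, g x ∂μ

/-- `u` is locally Lipschitz on `W`. -/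
def LocLipschitzOn (u : X → ℝ) (W : Set X) : Prop :=
  ∀ x ∈ W, ∃ K : ℝ≥0, ∃ t ∈ nhdsWithin x W, LipschitzOnWith K u t

/-- Convergence `uᵢ → v` in `L¹_loc(W)`. -/
def TendstoL1loc (μ : Measure X) (W : Set X) (u : ℕ → X → ℝ) (v : X → ℝ) : Prop :=
  ∀ W' : Set X, IsOpen W' → IsCompact (closure W') → closure W' ⊆ W →
    Tendsto (fun i => ∫⁻ x in W', ENNReal.ofReal |u i x - v x| ∂μ) atTop (𝓝 0)

/-- The total variation `‖Dv‖(W)` of a function `v` in an open set `W`. -/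
noncomputable def variationOn (μ : Measure X) (v : X → ℝ) (W : Set X) : ℝ≥0∞ :=
  ⨅ (u : ℕ → X → ℝ) (_ : (∀ i, LocLipschitzOn (u i) W) ∧ TendstoL1loc μ W u v),
    Filter.liminf (fun i => gradEnergy μ (u i) W) Filter.atTop

/-- The total variation `‖Dv‖(A)` of a function `v` in an arbitrary set `A`. -/
noncomputable def totalVar (μ : Measure X) (v : X → ℝ) (A : Set X) : ℝ≥0∞ :=
  ⨅ (W : Set X) (_ : IsOpen W ∧ A ⊆ W), variationOn μ v W

/-- The perimeter `P(E, A) = ‖Dχ_E‖(A)`. -/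
noncomputable def perimeter (μ : Measure X) (E A : Set X) : ℝ≥0∞ :=
  totalVar μ (Set.indicator E fun _ => (1 : ℝ)) A

/-- The measure `μ` is doubling. -/
def IsDoublingMeasure (μ : Measure X) : Prop :=
  ∃ C : ℝ≥0∞, 1 ≤ C ∧ ∀ (x : X) (r : ℝ), 0 < r → μ (ball x (2 * r)) ≤ C * μ (ball x r)

/-- The space supports a (1,1)-Poincaré inequality:
`⨍_{B(x,r)} |u - u_{B(x,r)}| dμ ≤ C r ⨍_{B(x,λr)} g dμ` for every ball, every
`u ∈ L¹_loc(X)` and every upper gradient `g` of `u` (stated here multiplied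
through by the measures of the two balls). -/
def SupportsPoincare (μ : Measure X) : Prop :=
  ∃ C lam : ℝ, 0 < C ∧ 1 ≤ lam ∧
    ∀ (x : X) (r : ℝ), 0 < r → ∀ (u : X → ℝ) (g : X → ℝ≥0∞),
      (∀ (y : X) (s : ℝ), IntegrableOn u (ball y s) μ) → IsUpperGradient g u →
        μ (ball x (lam * r)) *
            ∫⁻ y in ball x r, ENNReal.ofReal |u y - ⨍ z in ball x r, u z ∂μ| ∂μ ≤
          ENNReal.ofReal (C * r) * μ (ball x r) * ∫⁻ y in ball x (lam * r), g y ∂μ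

/-- `(X, d, μ)` is a PI space: complete, doubling, supporting a (1,1)-Poincaré
inequality. -/
def IsPISpace (μ : Measure X) : Prop :=
  CompleteSpace X ∧ IsDoublingMeasure μ ∧ SupportsPoincare μ

/-- A set `E` of finite perimeter is decomposable in a Borel set `D` if there is a
partition `{F, G}` of `E ∩ D` into sets of finite perimeter in `D`, both of positive
measure, with `P(E,D) = P(F,D) + P(G,D)`. -/
def IsDecomposableIn (μ : Measure X) (E D : Set X) : Prop :=
  ∃ F G : Set X, MeasurableSet F ∧ MeasurableSet G ∧ Disjoint F G ∧ F ∪ G = E ∩ D ∧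
    perimeter μ F D < ⊤ ∧ perimeter μ G D < ⊤ ∧ 0 < μ F ∧ 0 < μ G ∧
    perimeter μ E D = perimeter μ F D + perimeter μ G D

/-- `E` is indecomposable in `D`. -/
def IsIndecomposableIn (μ : Measure X) (E D : Set X) : Prop :=
  ¬ IsDecomposableIn μ E D

/-- `{F i}_{i ∈ I}` is a (finite or countable) partition of `E` into indecomposable
Borel sets of positive measure and finite perimeter whose perimeters sum to `P(E,X)`;
this is the defining property of the essential connected components `𝒞𝒞ᵉ(E)`. -/
def IsEssentialPartition (μ : Measure X) (E : Set X) (I : Set ℕ) (F : ℕ → Set X) : Prop :=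
  (∀ i ∈ I, MeasurableSet (F i)) ∧
  (∀ i ∈ I, ∀ j ∈ I, i ≠ j → Disjoint (F i) (F j)) ∧
  (⋃ i ∈ I, F i) = E ∧
  (∀ i ∈ I, 0 < μ (F i)) ∧
  (∀ i ∈ I, perimeter μ (F i) Set.univ < ⊤) ∧
  (∀ i ∈ I, IsIndecomposableIn μ (F i) Set.univ) ∧
  perimeter μ E Set.univ = ∑' i : I, perimeter μ (F i.1) Set.univ

/-- Given a decomposition `{G i}_{i ∈ I}` of `X ∖ E` into essential connected
components, the saturation of `E`: the union of `E` and its holes, i.e. the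
components of finite measure. -/
def saturationOf (μ : Measure X) (E : Set X) (I : Set ℕ) (G : ℕ → Set X) : Set X :=
  E ∪ ⋃ (i : ℕ) (_ : i ∈ I ∧ μ (G i) < ⊤), G i

/-- The measure-theoretic boundary `∂* E`: points where both `E` and its complement
have strictly positive upper density. -/
def mtBoundary (μ : Measure X) (E : Set X) : Set X :=
  {x : X |
    0 < Filter.limsup (fun r => μ (ball x r ∩ E) / μ (ball x r)) (nhdsWithin 0 (Set.Ioi 0)) ∧
    0 < Filter.limsup (fun r => μ (ball x r \ E) / μ (ball x r)) (nhdsWithin 0 (Set.Ioi 0))}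

/-- The restricted codimension-one Hausdorff content `ℋ_R`. -/
noncomputable def codimOneContent (μ : Measure X) (R : ℝ) (A : Set X) : ℝ≥0∞ :=
  ⨅ (s : Set (X × ℝ))
    (_ : s.Countable ∧ (∀ p ∈ s, 0 < p.2 ∧ p.2 ≤ R) ∧ A ⊆ ⋃ p ∈ s, ball p.1 p.2),
    ∑' p : s, μ (ball (p : X × ℝ).1 (p : X × ℝ).2) / ENNReal.ofReal (p : X × ℝ).2

/-- The codimension-one Hausdorff measure `ℋ(A) = lim_{R → 0} ℋ_R(A)`. -/
noncomputable def codimOneHausdorff (μ : Measure X) (A : Set X) : ℝ≥0∞ :=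
  ⨆ (R : ℝ) (_ : 0 < R), codimOneContent μ R A

theorem AbsolutelyContinuousOnInterval.ae_ofReal_abs_deriv_le {f : ℝ → ℝ} {L : ℝ} (hL : 0 ≤ L)
    (hf : AbsolutelyContinuousOnInterval f 0 L) {a : ℝ → ℝ≥0∞}
    (ha : AEMeasurable a (volume.restrict (Icc 0 L))) (hafin : ∫⁻ t in Icc 0 L, a t ≠ ⊤)
    (hfa : ∀ s t, 0 ≤ s → s ≤ t → t ≤ L →
      ENNReal.ofReal |f s - f t| ≤ ∫⁻ τ in Icc s t, a τ) :
    ∀ᵐ t, t ∈ Icc 0 L → ENNReal.ofReal |deriv f t| ≤ a t := by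
  have hint : IntegrableOn (fun t => (a t).toReal) (Icc 0 L) :=
    integrable_toReal_of_lintegral_ne_top ha hafin
  have hii : IntervalIntegrable (fun t => (a t).toReal) volume 0 L := by
    rw [intervalIntegrable_iff_integrableOn_Icc_of_le hL]
    exact hint
  have hiisub : ∀ s t, 0 ≤ s → s ≤ t → t ≤ L →
      IntervalIntegrable (fun t => (a t).toReal) volume s t := by
    intro s t hs hst ht
    rw [intervalIntegrable_iff_integrableOn_Icc_of_le hst]
    exact hint.mono_set (Icc_subset_Icc hs ht)
  have hbound : ∀ s ∈ Icc 0 L, ∀ t ∈ Icc 0 L, s ≤ t →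
      |f s - f t| ≤ (∫ τ in (0 : ℝ)..t, (a τ).toReal) - ∫ τ in (0 : ℝ)..s, (a τ).toReal := by
    intro s hs t ht hst
    have hfin : ∫⁻ τ in Icc s t, a τ ≠ ⊤ :=
      ne_top_of_le_ne_top hafin (lintegral_mono_set (Icc_subset_Icc hs.1 ht.2))
    have hae : AEMeasurable a (volume.restrict (Icc s t)) :=
      ha.mono_set (Icc_subset_Icc hs.1 ht.2)
    rw [intervalIntegral.integral_interval_sub_left (hiisub 0 t le_rfl ht.1 ht.2)
      (hiisub 0 s le_rfl hs.1 hs.2), intervalIntegral.integral_of_le hst,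
      ← integral_Icc_eq_integral_Ioc, integral_toReal hae (ae_lt_top' hae hfin)]
    exact (ENNReal.ofReal_le_iff_le_toReal hfin).1 (hfa s t hs.1 hst ht.2)
  have hmono_sub : MonotoneOn (fun x => (∫ τ in (0 : ℝ)..x, (a τ).toReal) - f x) (Icc 0 L) := by
    intro s hs t ht hst
    have := neg_abs_le (f s - f t)
    have := hbound s hs t ht hst
    dsimp only
    linarith
  have hmono_add : MonotoneOn (fun x => (∫ τ in (0 : ℝ)..x, (a τ).toReal) + f x) (Icc 0 L) := by
    intro s hs t ht hst
    have := le_abs_self (f s - f t)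
    have := hbound s hs t ht hst
    dsimp only
    linarith
  have hatop : ∀ᵐ t, t ∈ Icc 0 L → a t < ⊤ :=
    (ae_restrict_iff' measurableSet_Icc).1 (ae_lt_top' ha hafin)
  filter_upwards [hii.ae_hasDerivAt_integral, hf.ae_differentiableAt, hatop,
    Measure.ae_ne volume 0, Measure.ae_ne volume L] with t hΦ hdf htop h0 h1 ht
  rw [uIcc_of_le hL] at hΦ hdf
  have hΦ' := hΦ ht 0 ⟨le_rfl, hL⟩
  have hf' := (hdf ht).hasDerivAt
  have hnhds : Icc 0 L ∈ 𝓝 t :=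
    Icc_mem_nhds (lt_of_le_of_ne ht.1 (Ne.symm h0)) (lt_of_le_of_ne ht.2 h1)
  have hsub := hmono_sub.derivWithin_nonneg (x := t)
  have hadd := hmono_add.derivWithin_nonneg (x := t)
  rw [derivWithin_of_mem_nhds hnhds, (hΦ'.fun_sub hf').deriv] at hsub
  rw [derivWithin_of_mem_nhds hnhds, (hΦ'.fun_add hf').deriv] at hadd
  rw [ENNReal.ofReal_le_iff_le_toReal (htop ht).ne, abs_le]
  constructor <;> linarith

theorem deriv_max_eq_left {f p : ℝ → ℝ} {t : ℝ} (hf : DifferentiableAt ℝ f t)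
    (hw : DifferentiableAt ℝ (fun x => max (f x) (p x)) t) (h : p t ≤ f t) :
    deriv (fun x => max (f x) (p x)) t = deriv f t := by
  have hmin : IsLocalMin (fun x => max (f x) (p x) - f x) t :=
    Eventually.of_forall fun x => by
      simp only [max_eq_left h, sub_self]
      exact sub_nonneg.2 (le_max_left _ _)
  have := hmin.deriv_eq_zero
  rw [deriv_fun_sub hw hf] at this
  linarith

theorem ofReal_abs_sub_max_le_lintegral {f p : ℝ → ℝ} {L : ℝ} (hL : 0 ≤ L)
    (hf : AbsolutelyContinuousOnInterval f 0 L) (hp : AbsolutelyContinuousOnInterval p 0 L)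
    (hw : AbsolutelyContinuousOnInterval (fun x => max (f x) (p x)) 0 L) {a b k : ℝ → ℝ≥0∞}
    (ha : AEMeasurable a (volume.restrict (Icc 0 L))) (hafin : ∫⁻ t in Icc 0 L, a t ≠ ⊤)
    (hb : AEMeasurable b (volume.restrict (Icc 0 L))) (hbfin : ∫⁻ t in Icc 0 L, b t ≠ ⊤)
    (hfa : ∀ s t, 0 ≤ s → s ≤ t → t ≤ L →
      ENNReal.ofReal |f s - f t| ≤ ∫⁻ τ in Icc s t, a τ)
    (hpb : ∀ s t, 0 ≤ s → s ≤ t → t ≤ L →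
      ENNReal.ofReal |p s - p t| ≤ ∫⁻ τ in Icc s t, b τ)
    (hk : ∀ t ∈ Icc 0 L, (p t ≤ f t ∧ a t ≤ k t) ∨ (f t ≤ p t ∧ b t ≤ k t)) :
    ENNReal.ofReal |max (f 0) (p 0) - max (f L) (p L)| ≤ ∫⁻ t in Icc 0 L, k t := by
  rw [abs_sub_comm, ← hw.integral_deriv_eq_sub, ← Real.norm_eq_abs, ofReal_norm,
    intervalIntegral.integral_of_le hL, ← integral_Icc_eq_integral_Ioc]
  refine (enorm_integral_le_lintegral_enorm _).trans (lintegral_mono_ae ?_)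
  rw [ae_restrict_iff' measurableSet_Icc]
  filter_upwards [hf.ae_ofReal_abs_deriv_le hL ha hafin hfa,
    hp.ae_ofReal_abs_deriv_le hL hb hbfin hpb, hf.ae_differentiableAt, hp.ae_differentiableAt,
    hw.ae_differentiableAt] with t h1 h2 hdf hdp hdw ht
  rw [uIcc_of_le hL] at hdf hdp hdw
  rw [← ofReal_norm, Real.norm_eq_abs]
  rcases hk t ht with ⟨hle, hak⟩ | ⟨hle, hbk⟩
  · rw [deriv_max_eq_left (hdf ht) (hdw ht) hle]
    exact (h1 ht).trans hak
  · have hcomm : (fun x => max (f x) (p x)) = fun x => max (p x) (f x) :=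
      funext fun x => max_comm _ _
    rw [hcomm] at hdw ⊢
    rw [deriv_max_eq_left (hdp ht) (hdw ht) hle]
    exact (h2 ht).trans hbk

section Metric

variable {Y : Type*} [MetricSpace Y]

theorem LocLipschitzOn.mono {u : Y → ℝ} {W W' : Set Y} (hu : LocLipschitzOn u W) (h : W' ⊆ W) :
    LocLipschitzOn u W' :=
  LocallyLipschitzOn.mono (s := W') (t := W) hu h

theorem LocLipschitzOn.neg {u : Y → ℝ} {W : Set Y} (hu : LocLipschitzOn u W) :
    LocLipschitzOn (fun x => -u x) W := fun x hx => by
  obtain ⟨K, t, ht, hK⟩ := hu x hx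
  exact ⟨K, t, ht, hK.neg⟩

theorem LocLipschitzOn.max {u v : Y → ℝ} {W : Set Y} (hu : LocLipschitzOn u W)
    (hv : LocLipschitzOn v W) : LocLipschitzOn (fun x => max (u x) (v x)) W := fun x hx => by
  obtain ⟨K, t, ht, hK⟩ := hu x hx
  obtain ⟨K', t', ht', hK'⟩ := hv x hx
  exact ⟨_, t ∩ t', inter_mem ht ht', lipschitzWith_max.comp_lipschitzOnWith
    ((hK.mono inter_subset_left).prodMk (hK'.mono inter_subset_right))⟩

theorem LocLipschitzOn.min {u v : Y → ℝ} {W : Set Y} (hu : LocLipschitzOn u W)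
    (hv : LocLipschitzOn v W) : LocLipschitzOn (fun x => min (u x) (v x)) W := fun x hx => by
  obtain ⟨K, t, ht, hK⟩ := hu x hx
  obtain ⟨K', t', ht', hK'⟩ := hv x hx
  exact ⟨_, t ∩ t', inter_mem ht ht', lipschitzWith_min.comp_lipschitzOnWith
    ((hK.mono inter_subset_left).prodMk (hK'.mono inter_subset_right))⟩

theorem LocLipschitzOn.absolutelyContinuous_comp {u : Y → ℝ} {W : Set Y}
    (hu : LocLipschitzOn u W) {γ : Curve Y} (hγ : γ.IsIn W) :
    AbsolutelyContinuousOnInterval (fun t => u (γ.toFun t)) 0 γ.len := by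
  have hcpt : IsCompact (γ.toFun '' Icc 0 γ.len) :=
    isCompact_Icc.image_of_continuousOn γ.lipschitzOn.continuousOn
  have hloc : LocallyLipschitzOn (γ.toFun '' Icc 0 γ.len) u :=
    hu.mono (image_subset_iff.2 hγ)
  obtain ⟨K, hK⟩ := hloc.exists_lipschitzOnWith_of_compact hcpt
  refine LipschitzOnWith.absolutelyContinuousOnInterval (K := K * 1) ?_
  rw [uIcc_of_le γ.len_nonneg]
  exact hK.comp γ.lipschitzOn (mapsTo_image _ _)

/-- The restriction of a curve to a subinterval `[s, t]`. -/
def Curve.subcurve (γ : Curve Y) {s t : ℝ} (hs : 0 ≤ s) (hst : s ≤ t) (ht : t ≤ γ.len) :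
    Curve Y where
  len := t - s
  len_nonneg := sub_nonneg.2 hst
  toFun τ := γ.toFun (s + τ)
  lipschitzOn := fun x hx y hy => by
    simpa using γ.lipschitzOn (x := s + x) (y := s + y)
      ⟨by linarith [hx.1], by linarith [hx.2]⟩ ⟨by linarith [hy.1], by linarith [hy.2]⟩

theorem curveLintegral_subcurve (g : Y → ℝ≥0∞) (γ : Curve Y) {s t : ℝ} (hs : 0 ≤ s)
    (hst : s ≤ t) (ht : t ≤ γ.len) :
    curveLintegral g (γ.subcurve hs hst ht) = ∫⁻ τ in Icc s t, g (γ.toFun τ) := by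
  have h := (measurePreserving_add_left volume s).setLIntegral_comp_preimage_emb
    (measurableEmbedding_addLeft s) (fun τ => g (γ.toFun τ)) (Icc s t)
  rw [← h]
  simp [curveLintegral, Curve.subcurve]

theorem Curve.IsIn.subcurve {γ : Curve Y} {W : Set Y} (hγ : γ.IsIn W) {s t : ℝ} (hs : 0 ≤ s)
    (hst : s ≤ t) (ht : t ≤ γ.len) : (γ.subcurve hs hst ht).IsIn W := fun τ hτ => by
  have h2 : τ ≤ t - s := hτ.2
  exact hγ _ ⟨by linarith [hτ.1], by linarith⟩

/-- The upper gradient inequality holds along every subcurve of `γ`, with a finite integral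
of `g` along `γ`. -/
def HereditaryUpperGradIneq (g : Y → ℝ≥0∞) (u : Y → ℝ) (γ : Curve Y) : Prop :=
  curveLintegral g γ ≠ ⊤ ∧ ∀ s t, 0 ≤ s → s ≤ t → t ≤ γ.len →
    ENNReal.ofReal |u (γ.toFun s) - u (γ.toFun t)| ≤ ∫⁻ τ in Icc s t, g (γ.toFun τ)

theorem HereditaryUpperGradIneq.neg {g : Y → ℝ≥0∞} {u : Y → ℝ} {γ : Curve Y}
    (h : HereditaryUpperGradIneq g u γ) : HereditaryUpperGradIneq g (fun x => -u x) γ :=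
  ⟨h.1, fun s t hs hst ht => by
    rw [neg_sub_neg, abs_sub_comm]
    exact h.2 s t hs hst ht⟩

theorem UpperGradIneq.neg {g : Y → ℝ≥0∞} {u : Y → ℝ} {γ : Curve Y}
    (h : UpperGradIneq g u γ) : UpperGradIneq g (fun x => -u x) γ := by
  rw [UpperGradIneq, neg_sub_neg, abs_sub_comm]
  exact h

variable [MeasurableSpace Y]

theorem mod1_mono (μ : Measure Y) {Γ Γ' : Set (Curve Y)} (h : Γ ⊆ Γ') : mod1 μ Γ ≤ mod1 μ Γ' :=
  le_iInf₂ fun ρ hρ => iInf₂_le ρ ⟨hρ.1, fun γ hγ => hρ.2 γ (h hγ)⟩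

theorem mod1_union_le (μ : Measure Y) (Γ Γ' : Set (Curve Y)) :
    mod1 μ (Γ ∪ Γ') ≤ mod1 μ Γ + mod1 μ Γ' := by
  simp only [mod1, ENNReal.iInf_add, ENNReal.add_iInf]
  refine le_iInf₂ fun ρ' hρ' => le_iInf₂ fun ρ hρ => ?_
  rw [← lintegral_add_left hρ.1]
  refine iInf₂_le (fun x => ρ x + ρ' x) ⟨hρ.1.add hρ'.1, ?_⟩
  rintro γ (hγ | hγ)
  · exact (hρ.2 γ hγ).trans (lintegral_mono fun t => le_self_add)
  · exact (hρ'.2 γ hγ).trans (lintegral_mono fun t => le_add_self)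

theorem IsWeakUpperGradientOn.mono {μ : Measure Y} {g : Y → ℝ≥0∞} {u : Y → ℝ} {W W' : Set Y}
    (hg : IsWeakUpperGradientOn μ g u W) (h : W' ⊆ W) : IsWeakUpperGradientOn μ g u W' :=
  ⟨hg.1, le_antisymm (hg.2 ▸ mod1_mono μ fun _ ⟨hnc, hγ, hbad⟩ =>
    ⟨hnc, fun s hs => h (hγ s hs), hbad⟩) zero_le⟩

theorem gradEnergy_mono (μ : Measure Y) (u : Y → ℝ) {W W' : Set Y} (h : W' ⊆ W) :
    gradEnergy μ u W' ≤ gradEnergy μ u W :=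
  le_iInf₂ fun g hg => (iInf₂_le g (hg.mono h)).trans (lintegral_mono_set h)

theorem TendstoL1loc.mono {μ : Measure Y} {W W' : Set Y} {u : ℕ → Y → ℝ} {v : Y → ℝ}
    (hu : TendstoL1loc μ W u v) (h : W' ⊆ W) : TendstoL1loc μ W' u v :=
  fun V hV hc hVW => hu V hV hc (hVW.trans h)

theorem variationOn_mono (μ : Measure Y) (v : Y → ℝ) {W W' : Set Y} (h : W' ⊆ W) :
    variationOn μ v W' ≤ variationOn μ v W := by
  refine le_iInf₂ fun u hu => ?_
  have hu' : (∀ i, LocLipschitzOn (u i) W') ∧ TendstoL1loc μ W' u v :=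
    ⟨fun i => (hu.1 i).mono h, hu.2.mono h⟩
  exact (iInf₂_le u hu').trans
    (liminf_le_liminf (Eventually.of_forall fun i => gradEnergy_mono μ (u i) h))

theorem totalVar_mono (μ : Measure Y) (v : Y → ℝ) {A B : Set Y} (h : A ⊆ B) :
    totalVar μ v A ≤ totalVar μ v B :=
  le_iInf₂ fun W hW => iInf₂_le W ⟨hW.1, h.trans hW.2⟩

/-- Approximating sequences can be chosen with all energies below any bound exceeding the
total variation. -/
theorem exists_seq_gradEnergy_lt_of_variationOn_lt {μ : Measure Y} {v : Y → ℝ} {W : Set Y}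
    {c : ℝ≥0∞} (h : variationOn μ v W < c) :
    ∃ u : ℕ → Y → ℝ, (∀ i, LocLipschitzOn (u i) W) ∧ TendstoL1loc μ W u v ∧
      ∀ i, gradEnergy μ (u i) W < c := by
  simp only [variationOn, iInf_lt_iff] at h
  obtain ⟨u, ⟨hu, hlim⟩, hlt⟩ := h
  obtain ⟨φ, hφ, hlt⟩ := extraction_of_frequently_atTop
    (frequently_lt_of_liminf_lt (by isBoundedDefault) hlt)
  exact ⟨fun i => u (φ i), fun i => hu _,
    fun V hV hc hVW => (hlim V hV hc hVW).comp hφ.tendsto_atTop, hlt⟩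

end Metric

theorem Curve.aemeasurable_comp {g : X → ℝ≥0∞} (hg : Measurable g) (γ : Curve X) :
    AEMeasurable (fun t => g (γ.toFun t)) (volume.restrict (Icc 0 γ.len)) :=
  hg.comp_aemeasurable (γ.lipschitzOn.continuousOn.aemeasurable measurableSet_Icc)

theorem UpperGradIneq.max {W : Set X} {u v : X → ℝ} {g h k : X → ℝ≥0∞} {γ : Curve X}
    (hγ : γ.IsIn W) (hu : LocLipschitzOn u W) (hv : LocLipschitzOn v W) (hg : Measurable g)
    (hh : Measurable h) (hgu : HereditaryUpperGradIneq g u γ)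
    (hhv : HereditaryUpperGradIneq h v γ)
    (hk : ∀ x ∈ W, (v x ≤ u x ∧ g x ≤ k x) ∨ (u x ≤ v x ∧ h x ≤ k x)) :
    UpperGradIneq k (fun x => max (u x) (v x)) γ :=
  ofReal_abs_sub_max_le_lintegral γ.len_nonneg (hu.absolutelyContinuous_comp hγ)
    (hv.absolutelyContinuous_comp hγ) ((hu.max hv).absolutelyContinuous_comp hγ)
    (γ.aemeasurable_comp hg) hgu.1 (γ.aemeasurable_comp hh) hhv.1 hgu.2 hhv.2
    fun t ht => hk _ (hγ t ht)

theorem UpperGradIneq.min {W : Set X} {u v : X → ℝ} {g h k : X → ℝ≥0∞} {γ : Curve X}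
    (hγ : γ.IsIn W) (hu : LocLipschitzOn u W) (hv : LocLipschitzOn v W) (hg : Measurable g)
    (hh : Measurable h) (hgu : HereditaryUpperGradIneq g u γ)
    (hhv : HereditaryUpperGradIneq h v γ)
    (hk : ∀ x ∈ W, (u x ≤ v x ∧ g x ≤ k x) ∨ (v x ≤ u x ∧ h x ≤ k x)) :
    UpperGradIneq k (fun x => min (u x) (v x)) γ := by
  have := (UpperGradIneq.max hγ hu.neg hv.neg hg hh hgu.neg hhv.neg (k := k)
    (by simpa only [neg_le_neg_iff] using hk)).neg
  simpa only [max_neg_neg, neg_neg] using this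

theorem mod1_lintegral_eq_top (μ : Measure X) {W : Set X} (hW : MeasurableSet W) {g : X → ℝ≥0∞}
    (hg : Measurable g) (hfin : ∫⁻ x in W, g x ∂μ ≠ ⊤) :
    mod1 μ {γ : Curve X | γ.IsIn W ∧ curveLintegral g γ = ⊤} = 0 := by
  have key : ∀ n : ℕ, mod1 μ {γ : Curve X | γ.IsIn W ∧ curveLintegral g γ = ⊤} ≤
      (n + 1 : ℝ≥0∞)⁻¹ * ∫⁻ x in W, g x ∂μ := by
    intro n
    have hm : Measurable (W.indicator g) := hg.indicator hW
    rw [← lintegral_indicator hW, ← lintegral_const_mul _ hm]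
    refine iInf₂_le (fun x => (n + 1 : ℝ≥0∞)⁻¹ * W.indicator g x)
      ⟨hm.const_mul _, fun γ hγ => ?_⟩
    have hcongr : curveLintegral (W.indicator g) γ = curveLintegral g γ :=
      setLIntegral_congr_fun measurableSet_Icc fun t ht => indicator_of_mem (hγ.1 t ht) g
    have : curveLintegral (fun x => (n + 1 : ℝ≥0∞)⁻¹ * W.indicator g x) γ =
        (n + 1 : ℝ≥0∞)⁻¹ * curveLintegral (W.indicator g) γ :=
      lintegral_const_mul'' _ (γ.aemeasurable_comp hm)
    rw [this, hcongr, hγ.2, ENNReal.mul_top (by simp)]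
    exact le_top
  have hlim : Tendsto (fun n : ℕ => (n + 1 : ℝ≥0∞)⁻¹ * ∫⁻ x in W, g x ∂μ) atTop (𝓝 0) := by
    have h0 : Tendsto (fun n : ℕ => (n + 1 : ℝ≥0∞)⁻¹) atTop (𝓝 0) := by
      simpa using (tendsto_add_atTop_iff_nat 1).2 ENNReal.tendsto_inv_nat_nhds_zero
    simpa using ENNReal.Tendsto.mul_const h0 (Or.inr hfin)
  exact le_antisymm (ge_of_tendsto' hlim key) zero_le

theorem IsWeakUpperGradientOn.mod1_not_hereditary {μ : Measure X} {W : Set X}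
    (hW : MeasurableSet W) {g : X → ℝ≥0∞} {u : X → ℝ} (h : IsWeakUpperGradientOn μ g u W)
    (hfin : ∫⁻ x in W, g x ∂μ ≠ ⊤) :
    mod1 μ {γ : Curve X | γ.IsIn W ∧ ¬ HereditaryUpperGradIneq g u γ} = 0 := by
  set Γ := {γ : Curve X | γ.IsNonconstant ∧ γ.IsIn W ∧ ¬ UpperGradIneq g u γ}
  set Γ' := {γ : Curve X | ∃ (s t : ℝ) (hs : 0 ≤ s) (hst : s ≤ t) (ht : t ≤ γ.len),
    γ.subcurve hs hst ht ∈ Γ}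
  have hΓ' : mod1 μ Γ' = 0 := by
    refine le_antisymm ((le_iInf₂ fun ρ hρ => iInf₂_le ρ ⟨hρ.1, ?_⟩).trans h.2.le) zero_le
    rintro γ ⟨s, t, hs, hst, ht, hγ⟩
    refine (hρ.2 _ hγ).trans ?_
    rw [curveLintegral_subcurve]
    exact lintegral_mono_set (Icc_subset_Icc hs ht)
  refine le_antisymm ((mod1_mono μ (Γ' := {γ : Curve X | γ.IsIn W ∧ curveLintegral g γ = ⊤} ∪ Γ')
    ?_).trans ((mod1_union_le μ _ _).trans ?_)) zero_le
  · rintro γ ⟨hγ, hbad⟩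
    by_cases htop : curveLintegral g γ = ⊤
    · exact Or.inl ⟨hγ, htop⟩
    · refine Or.inr ?_
      simp only [HereditaryUpperGradIneq, not_and, not_forall] at hbad
      obtain ⟨s, t, hs, hst, ht, hlt⟩ := hbad htop
      refine ⟨s, t, hs, hst, ht, ?_, hγ.subcurve hs hst ht, ?_⟩
      · refine ⟨0, ⟨le_rfl, sub_nonneg.2 hst⟩, t - s, ⟨sub_nonneg.2 hst, le_rfl⟩, fun heq => ?_⟩
        apply hlt
        simp only [Curve.subcurve, add_zero, add_sub_cancel] at heq
        simp [heq]
      · rw [UpperGradIneq, curveLintegral_subcurve]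
        simpa [Curve.subcurve] using hlt
  · rw [mod1_lintegral_eq_top μ hW h.1 hfin, hΓ', add_zero]

theorem isWeakUpperGradientOn_of_hereditary {μ : Measure X} {W : Set X} (hW : MeasurableSet W)
    {g h k : X → ℝ≥0∞} {u v w : X → ℝ} (hg : IsWeakUpperGradientOn μ g u W)
    (hgfin : ∫⁻ x in W, g x ∂μ ≠ ⊤) (hh : IsWeakUpperGradientOn μ h v W)
    (hhfin : ∫⁻ x in W, h x ∂μ ≠ ⊤) (hk : Measurable k)
    (hw : ∀ γ : Curve X, γ.IsIn W → HereditaryUpperGradIneq g u γ →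
      HereditaryUpperGradIneq h v γ → UpperGradIneq k w γ) :
    IsWeakUpperGradientOn μ k w W := by
  refine ⟨hk, le_antisymm ((mod1_mono μ (Γ' :=
    {γ : Curve X | γ.IsIn W ∧ ¬ HereditaryUpperGradIneq g u γ} ∪
      {γ : Curve X | γ.IsIn W ∧ ¬ HereditaryUpperGradIneq h v γ}) ?_).trans
    ((mod1_union_le μ _ _).trans ?_)) zero_le⟩
  · rintro γ ⟨-, hγ, hbad⟩
    by_contra hcon
    simp only [mem_union, mem_ofPred_eq, hγ, true_and, not_or, not_not] at hcon
    exact hbad (hw γ hγ hcon.1 hcon.2)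
  · rw [hg.mod1_not_hereditary hW hgfin, hh.mod1_not_hereditary hW hhfin, add_zero]

theorem gradEnergy_max_add_gradEnergy_min_le (μ : Measure X) {W : Set X} (hW : IsOpen W)
    {u v : X → ℝ} (hu : LocLipschitzOn u W) (hv : LocLipschitzOn v W) :
    gradEnergy μ (fun x => max (u x) (v x)) W + gradEnergy μ (fun x => min (u x) (v x)) W ≤
      gradEnergy μ u W + gradEnergy μ v W := by
  classical
  conv_rhs => simp only [gradEnergy, ENNReal.iInf_add, ENNReal.add_iInf]
  refine le_iInf₂ fun h hh => le_iInf₂ fun g hg => ?_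
  by_cases hgfin : ∫⁻ x in W, g x ∂μ = ⊤
  · simp [hgfin]
  by_cases hhfin : ∫⁻ x in W, h x ∂μ = ⊤
  · simp [hhfin]
  have hcu : ContinuousOn u W := LocallyLipschitzOn.continuousOn (s := W) hu
  have hcv : ContinuousOn v W := LocallyLipschitzOn.continuousOn (s := W) hv
  set S : Set X := W ∩ {x | 0 < u x - v x} with hS
  have hSm : MeasurableSet S := ((hcu.sub hcv).isOpen_inter_preimage hW isOpen_Ioi).measurableSet
  have hmax : IsWeakUpperGradientOn μ (S.piecewise g h) (fun x => max (u x) (v x)) W :=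
    isWeakUpperGradientOn_of_hereditary hW.measurableSet hg hgfin hh hhfin
      (hg.1.piecewise hSm hh.1) fun γ hγ hgu hhv =>
      UpperGradIneq.max hγ hu hv hg.1 hh.1 hgu hhv fun x hx => by
        by_cases hxS : x ∈ S
        · exact Or.inl ⟨(sub_pos.1 hxS.2).le, by simp [hxS]⟩
        · refine Or.inr ⟨?_, by simp [hxS]⟩
          by_contra! hlt
          exact hxS ⟨hx, sub_pos.2 hlt⟩
  have hmin : IsWeakUpperGradientOn μ (S.piecewise h g) (fun x => min (u x) (v x)) W :=
    isWeakUpperGradientOn_of_hereditary hW.measurableSet hg hgfin hh hhfin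
      (hh.1.piecewise hSm hg.1) fun γ hγ hgu hhv =>
      UpperGradIneq.min hγ hu hv hg.1 hh.1 hgu hhv fun x hx => by
        by_cases hxS : x ∈ S
        · exact Or.inr ⟨(sub_pos.1 hxS.2).le, by simp [hxS]⟩
        · refine Or.inl ⟨?_, by simp [hxS]⟩
          by_contra! hlt
          exact hxS ⟨hx, sub_pos.2 hlt⟩
  have hlemax := iInf₂_le (f := fun k (_ : IsWeakUpperGradientOn μ k _ W) => ∫⁻ x in W, k x ∂μ)
    _ hmax
  have hlemin := iInf₂_le (f := fun k (_ : IsWeakUpperGradientOn μ k _ W) => ∫⁻ x in W, k x ∂μ)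
    _ hmin
  refine (add_le_add hlemax hlemin).trans_eq ?_
  rw [← lintegral_add_left (hg.1.piecewise hSm hh.1), ← lintegral_add_left hg.1]
  refine lintegral_congr fun x => ?_
  by_cases hxS : x ∈ S <;> simp [hxS, add_comm]

theorem TendstoL1loc.of_abs_le {μ : Measure X} {W : Set X} {u v w : ℕ → X → ℝ} {a b c : X → ℝ}
    (hu : TendstoL1loc μ W u a) (hv : TendstoL1loc μ W v b)
    (hum : ∀ i, ContinuousOn (u i) W) (ha : Measurable a)
    (hw : ∀ i x, |w i x - c x| ≤ |u i x - a x| + |v i x - b x|) : TendstoL1loc μ W w c := by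
  intro V hV hc hVW
  have hlim := (hu V hV hc hVW).add (hv V hV hc hVW)
  rw [add_zero] at hlim
  refine tendsto_of_tendsto_of_tendsto_of_le_of_le tendsto_const_nhds hlim (fun _ => zero_le)
    fun i => ?_
  have hm : AEMeasurable (fun x => ENNReal.ofReal |u i x - a x|) (μ.restrict V) :=
    ((((hum i).mono (subset_closure.trans hVW)).aemeasurable hV.measurableSet).sub
      ha.aemeasurable).abs.ennreal_ofReal
  dsimp only
  rw [← lintegral_add_left' hm]
  refine lintegral_mono fun x => ?_
  rw [← ENNReal.ofReal_add (abs_nonneg _) (abs_nonneg _)]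
  exact ENNReal.ofReal_le_ofReal (hw i x)

theorem abs_min_sub_min_le_add (a b c d : ℝ) : |min a b - min c d| ≤ |a - c| + |b - d| :=
  (abs_min_sub_min_le_max a b c d).trans
    (max_le_add_of_nonneg (abs_nonneg _) (abs_nonneg _))

theorem abs_max_sub_max_le_add (a b c d : ℝ) : |max a b - max c d| ≤ |a - c| + |b - d| :=
  (abs_max_sub_max_le_max a b c d).trans
    (max_le_add_of_nonneg (abs_nonneg _) (abs_nonneg _))

theorem ENNReal.liminf_add_liminf_le {f g : ℕ → ℝ≥0∞} {c : ℝ≥0∞} (h : ∀ i, f i + g i ≤ c) :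
    liminf f atTop + liminf g atTop ≤ c := by
  have hmono : ∀ f : ℕ → ℝ≥0∞, Monotone fun n => ⨅ i ≥ n, f i := fun f m n hmn =>
    biInf_mono fun i hi => hmn.trans hi
  rw [liminf_eq_iSup_iInf_of_nat, liminf_eq_iSup_iInf_of_nat,
    ENNReal.iSup_add_iSup_of_monotone (hmono f) (hmono g)]
  exact iSup_le fun n => (add_le_add (iInf₂_le n le_rfl) (iInf₂_le n le_rfl)).trans (h n)

theorem variationOn_max_add_variationOn_min_le (μ : Measure X) {W : Set X} (hW : IsOpen W)
    {a b : X → ℝ} (ha : Measurable a) :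
    variationOn μ (fun x => max (a x) (b x)) W + variationOn μ (fun x => min (a x) (b x)) W ≤
      variationOn μ a W + variationOn μ b W := by
  refine le_of_forall_gt fun c hc => ?_
  obtain ⟨c₁, h₁, c₂, h₂, hcc⟩ := ENNReal.exists_add_lt_of_add_lt hc
  obtain ⟨u, hu, hua, hule⟩ := exists_seq_gradEnergy_lt_of_variationOn_lt h₁
  obtain ⟨v, hv, hvb, hvle⟩ := exists_seq_gradEnergy_lt_of_variationOn_lt h₂
  have hcont : ∀ i, ContinuousOn (u i) W := fun i =>
    LocallyLipschitzOn.continuousOn (s := W) (hu i)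
  have hmax := iInf₂_le (f := fun (w : ℕ → X → ℝ) (_ : (∀ i, LocLipschitzOn (w i) W) ∧
      TendstoL1loc μ W w fun x => max (a x) (b x)) =>
        liminf (fun i => gradEnergy μ (w i) W) atTop) (fun i x => max (u i x) (v i x))
    ⟨fun i => (hu i).max (hv i),
      hua.of_abs_le hvb hcont ha fun i x => abs_max_sub_max_le_add _ _ _ _⟩
  have hmin := iInf₂_le (f := fun (w : ℕ → X → ℝ) (_ : (∀ i, LocLipschitzOn (w i) W) ∧
      TendstoL1loc μ W w fun x => min (a x) (b x)) =>
        liminf (fun i => gradEnergy μ (w i) W) atTop) (fun i x => min (u i x) (v i x))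
    ⟨fun i => (hu i).min (hv i),
      hua.of_abs_le hvb hcont ha fun i x => abs_min_sub_min_le_add _ _ _ _⟩
  refine ((add_le_add hmax hmin).trans ?_).trans_lt hcc
  exact ENNReal.liminf_add_liminf_le fun i =>
    (gradEnergy_max_add_gradEnergy_min_le μ hW (hu i) (hv i)).trans
      (add_le_add (hule i).le (hvle i).le)

/-- Strong subadditivity of the perimeter. -/
theorem perimeter_union_add_perimeter_inter_le (μ : Measure X) {A B : Set X}
    (hA : MeasurableSet A) (D : Set X) :
    perimeter μ (A ∪ B) D + perimeter μ (A ∩ B) D ≤ perimeter μ A D + perimeter μ B D := by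
  have hmax : ((A ∪ B).indicator fun _ => (1 : ℝ)) =
      fun x => max (A.indicator (fun _ => (1 : ℝ)) x) (B.indicator (fun _ => (1 : ℝ)) x) := by
    ext x
    by_cases hxA : x ∈ A <;> by_cases hxB : x ∈ B <;> simp [hxA, hxB]
  have hmin : ((A ∩ B).indicator fun _ => (1 : ℝ)) =
      fun x => min (A.indicator (fun _ => (1 : ℝ)) x) (B.indicator (fun _ => (1 : ℝ)) x) := by
    ext x
    by_cases hxA : x ∈ A <;> by_cases hxB : x ∈ B <;> simp [hxA, hxB]
  rw [perimeter, perimeter, hmax, hmin]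
  conv_rhs => simp only [perimeter, totalVar, ENNReal.iInf_add, ENNReal.add_iInf]
  refine le_iInf₂ fun W₂ hW₂ => le_iInf₂ fun W₁ hW₁ => ?_
  have hD : D ⊆ W₁ ∩ W₂ := subset_inter hW₁.2 hW₂.2
  have hopen : IsOpen (W₁ ∩ W₂) := hW₁.1.inter hW₂.1
  exact (add_le_add (iInf₂_le _ ⟨hopen, hD⟩) (iInf₂_le _ ⟨hopen, hD⟩)).trans
    ((variationOn_max_add_variationOn_min_le μ hopen (measurable_const.indicator hA)).trans
      (add_le_add (variationOn_mono μ _ inter_subset_left)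
        (variationOn_mono μ _ inter_subset_right)))

/-- **Lemma 4.2 (Lemma 2.8 of BPR).** If `{F, G}` is a Borel partition of a set of
finite perimeter `E` with `P(E,D) = P(F,D) + P(G,D)` for a Borel set `D`, then
`P(A,D) = P(A ∩ F, D) + P(A ∩ G, D)` for every set `A ⊆ E` of finite perimeter. -/
theorem perimeter_partition_restrict
    [ProperSpace X] (μ : Measure X)
    (hball : ∀ (x : X) (r : ℝ), 0 < r → 0 < μ (ball x r) ∧ μ (ball x r) < ⊤)
    (E : Set X) (hE : MeasurableSet E) (hEfin : perimeter μ E Set.univ < ⊤)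
    (D : Set X) (hD : MeasurableSet D)
    (F G : Set X) (hFmeas : MeasurableSet F) (hGmeas : MeasurableSet G)
    (hdisj : Disjoint F G) (hunion : F ∪ G = E)
    (hadd : perimeter μ E D = perimeter μ F D + perimeter μ G D) :
    ∀ A : Set X, A ⊆ E → MeasurableSet A → perimeter μ A Set.univ < ⊤ →
      perimeter μ A D = perimeter μ (A ∩ F) D + perimeter μ (A ∩ G) D := by
  intro A hAE hA hAfin
  have hED : perimeter μ E D < ⊤ := (totalVar_mono μ _ (subset_univ D)).trans_lt hEfin
  have hAD : perimeter μ A D < ⊤ := (totalVar_mono μ _ (subset_univ D)).trans_lt hAfin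
  refine le_antisymm ?_ ?_
  · have hsub := perimeter_union_add_perimeter_inter_le μ (B := A ∩ G) (hA.inter hFmeas) D
    rw [← inter_union_distrib_left, hunion, inter_eq_left.2 hAE] at hsub
    exact le_self_add.trans hsub
  · have hF := perimeter_union_add_perimeter_inter_le μ (B := F) hA D
    have hG := perimeter_union_add_perimeter_inter_le μ (B := G) hA D
    have hAE' := perimeter_union_add_perimeter_inter_le μ (B := A ∪ G) (hA.union hFmeas) D
    rw [← union_inter_distrib_left, hdisj.inter_eq, union_empty, ← union_union_distrib_left,
      hunion, union_eq_right.2 hAE] at hAE'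
    refine (ENNReal.add_le_add_iff_right (ENNReal.add_lt_top.2 ⟨hED, hAD⟩).ne).1 ?_
    calc perimeter μ (A ∩ F) D + perimeter μ (A ∩ G) D + (perimeter μ E D + perimeter μ A D)
        ≤ perimeter μ (A ∩ F) D + perimeter μ (A ∩ G) D +
            (perimeter μ (A ∪ F) D + perimeter μ (A ∪ G) D) := by gcongr
      _ = (perimeter μ (A ∪ F) D + perimeter μ (A ∩ F) D) +
            (perimeter μ (A ∪ G) D + perimeter μ (A ∩ G) D) := by ring
      _ ≤ (perimeter μ A D + perimeter μ F D) + (perimeter μ A D + perimeter μ G D) := by gcongr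
      _ = perimeter μ A D + (perimeter μ E D + perimeter μ A D) := by rw [hadd]; ring
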